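/- arXiv:math/0612306 — 6 statements merged into one kernel-verified Lean document; each statement's English description precedes it below -/
import Mathlib

section
/- For every starting point x_0 ≥ 0 and every x ∈ C(x_0), the measure ν satisfies the invariance equation Σ_{w ∈ C(x_0)} ν({w}) p(w,x) = ν({x}); that is, the restriction of ν to the essential class C(x_0) is an invariant measure for the reflected random walk on C(x_0). -/
open MeasureTheory ProbabilityTheory Filter
open scoped ENNReal

/-- The essential class `C(x₀) = {kd ± x₀ : k ∈ ℤ} ∩ [0, N]`, where `N = sup supp μ`
(the condition `x ≤ N` being expressed as: `x` is below every upper bound of the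
support of `μ`, which is vacuous when `N = ∞`). -/
def essClass (μ : MeasureTheory.Measure ℝ) (d : ℕ) (x₀ : ℝ) : Set ℝ :=
  {x : ℝ | 0 ≤ x ∧ (∃ k : ℤ, x = k * d + x₀ ∨ x = k * d - x₀) ∧
    ∀ u : ℝ, (∀ n : ℕ, μ {(n : ℝ)} ≠ 0 → (n : ℝ) ≤ u) → x ≤ u}

/-- The one-step transition probabilities of the reflected random walk:
`p(w,0) = μ({w})`, `p(w,y) = μ({w+y})` if `w < y`, and
`p(w,y) = μ({w-y}) + μ({w+y})` if `w ≥ y > 0`. -/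
noncomputable def reflTransKernel (μ : MeasureTheory.Measure ℝ) (w y : ℝ) : ℝ≥0∞ :=
  if y = 0 then μ {w} else if w < y then μ {w + y} else μ {w - y} + μ {w + y}

/-- The invariant measure `ν`: `ν({0}) = (1 - μ({0}))/2` and
`ν({x}) = μ({x})/2 + μ((x,∞))` for `x > 0`. -/
noncomputable def nuFun (μ : MeasureTheory.Measure ℝ) (x : ℝ) : ℝ≥0∞ :=
  if x = 0 then (1 - μ {(0 : ℝ)}) / 2 else μ {x} / 2 + μ (Set.Ioi x)

/-- `1` above the threshold `t`, `1/2` at `t`, and `0` below. -/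
noncomputable def halfStep (t y : ℝ) : ℝ≥0∞ :=
  if t < y then 1 else if y = t then 1 / 2 else 0

lemma measurable_halfStep : Measurable (Function.uncurry halfStep) := by
  refine Measurable.ite (measurableSet_lt measurable_fst measurable_snd) measurable_const ?_
  exact Measurable.ite (measurableSet_eq_fun measurable_snd measurable_fst) measurable_const
    measurable_const

lemma lintegral_halfStep (μ : Measure ℝ) (t : ℝ) :
    ∫⁻ y, halfStep t y ∂μ = μ {t} / 2 + μ (Set.Ioi t) := by
  have h : ∀ y, halfStep t y =
      ({t} : Set ℝ).indicator (fun _ => (1 / 2 : ℝ≥0∞)) y +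
        (Set.Ioi t).indicator (fun _ => 1) y := by
    intro y
    rcases lt_trichotomy t y with h | h | h
    · simp [halfStep, h, h.ne']
    · simp [halfStep, h]
    · simp [halfStep, h.not_gt, h.ne]
  simp_rw [h]
  rw [lintegral_add_left (measurable_const.indicator (measurableSet_singleton t)),
    lintegral_indicator_const (measurableSet_singleton t),
    lintegral_indicator_const measurableSet_Ioi, one_mul, ENNReal.div_eq_inv_mul,
    ENNReal.div_eq_inv_mul, mul_one]

/-- Integration against a lattice measure is summation over its atoms. -/
lemma tsum_mul_singleton_eq_lintegral (μ : Measure ℝ)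
    (hlat : μ (Set.range (fun n : ℕ => (n : ℝ)))ᶜ = 0) (g : ℝ → ℝ≥0∞) :
    ∑' w : ℝ, g w * μ {w} = ∫⁻ w, g w ∂μ := by
  have hr : μ.restrict (Set.range (fun n : ℕ => (n : ℝ))) = μ :=
    Measure.restrict_eq_self_of_ae_mem (by rwa [ae_iff])
  conv_rhs => rw [← hr]
  rw [lintegral_countable _ (Set.countable_range _)]
  symm
  refine tsum_subtype_eq_of_support_subset (f := fun w => g w * μ {w}) ?_
  intro w hw
  by_contra hwr
  exact hw (by
    have : μ {w} = 0 := measure_mono_null (by simpa using hwr) hlat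
    simp [this])

lemma exists_nat_of_singleton_ne_zero (μ : Measure ℝ)
    (hlat : μ (Set.range (fun n : ℕ => (n : ℝ)))ᶜ = 0) {w : ℝ} (hw : μ {w} ≠ 0) :
    ∃ n : ℕ, (n : ℝ) = w := by
  by_contra h
  exact hw (measure_mono_null (by simpa using h) hlat)

/-- Splitting `Y' ≥ x` according to the position of `Y' - Y` relative to `x`, for
independent `Y`, `Y'` of law `μ`. -/
lemma lintegral_tail_add_lintegral_tail (μ : Measure ℝ) [IsProbabilityMeasure μ]
    (hnn : ∀ᵐ y ∂μ, 0 ≤ y) (x : ℝ) :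
    ∫⁻ z, (μ {z + x} / 2 + μ (Set.Ioi (z + x))) ∂μ +
      ∫⁻ z, (Set.Ici x).indicator (fun z => μ {z - x} / 2 + μ (Set.Ioi (z - x))) z ∂μ =
      μ (Set.Ici x) := by
  have m1 : Measurable (fun q : ℝ × ℝ => halfStep (q.1 + x) q.2) :=
    measurable_halfStep.comp ((measurable_fst.add_const x).prodMk measurable_snd)
  have m2 (t : ℝ) : Measurable (halfStep t) := measurable_halfStep.comp measurable_prodMk_left
  have h1 : ∫⁻ z, (μ {z + x} / 2 + μ (Set.Ioi (z + x))) ∂μ =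
      ∫⁻ z, ∫⁻ y, halfStep (y + x) z ∂μ ∂μ := by
    simp_rw [← lintegral_halfStep]
    exact lintegral_lintegral_swap m1.aemeasurable
  rw [h1, ← lintegral_add_left (m1.lintegral_prod_left'),
    ← lintegral_indicator_one measurableSet_Ici]
  refine lintegral_congr fun z => ?_
  by_cases hz : x ≤ z
  · rw [Set.indicator_of_mem (Set.mem_Ici.2 hz), Set.indicator_of_mem (Set.mem_Ici.2 hz),
      ← lintegral_halfStep, ← lintegral_add_right _ (m2 _)]
    have : ∀ y, halfStep (y + x) z + halfStep (z - x) y = 1 := by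
      intro y
      rcases lt_trichotomy (y + x) z with h | h | h
      · have h2 : y < z - x := by linarith
        simp [halfStep, h, h2.not_gt, h2.ne]
      · have h2 : y = z - x := by linarith
        simp [halfStep, h2, ENNReal.inv_two_add_inv_two]
      · have h2 : z - x < y := by linarith
        simp [halfStep, h.not_gt, h.ne, h2]
    simp [this]
  · rw [Set.indicator_of_notMem (by simpa using hz), Set.indicator_of_notMem (by simpa using hz),
      add_zero, lintegral_eq_zero_of_ae_eq_zero]
    filter_upwards [hnn] with y hy
    have h : z < y + x := by linarith [not_le.1 hz]
    simp [halfStep, h.not_gt, h.ne]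

/-- The sum over all non-negative states of the symmetrised tail against the two jumps
leading to `x`. -/
lemma tsum_tail_mul_jumps (μ : Measure ℝ) [IsProbabilityMeasure μ]
    (hlat : μ (Set.range (fun n : ℕ => (n : ℝ)))ᶜ = 0) {x : ℝ} (hx : 0 ≤ x) :
    ∑' w : ℝ, (Set.Ici (0 : ℝ)).indicator (fun w => μ {w} / 2 + μ (Set.Ioi w)) w *
      (μ {w - x} + μ {w + x}) = μ (Set.Ici x) := by
  have hnn : ∀ᵐ y ∂μ, 0 ≤ y := by
    have : ∀ᵐ y ∂μ, y ∈ Set.range (fun n : ℕ => (n : ℝ)) := by rwa [ae_iff]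
    filter_upwards [this] with y hy
    obtain ⟨n, rfl⟩ := hy
    positivity
  set G : ℝ → ℝ≥0∞ := (Set.Ici (0 : ℝ)).indicator (fun w => μ {w} / 2 + μ (Set.Ioi w)) with hG
  have e1 : ∑' w : ℝ, G w * μ {w - x} = ∫⁻ z, G (z + x) ∂μ := by
    rw [← tsum_mul_singleton_eq_lintegral μ hlat, ← (Equiv.addRight x).tsum_eq]
    simp
  have e2 : ∑' w : ℝ, G w * μ {w + x} = ∫⁻ z, G (z - x) ∂μ := by
    rw [← tsum_mul_singleton_eq_lintegral μ hlat, ← (Equiv.subRight x).tsum_eq]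
    simp
  simp_rw [mul_add]
  rw [ENNReal.tsum_add, e1, e2, ← lintegral_tail_add_lintegral_tail μ hnn x]
  congr 1
  · refine lintegral_congr_ae ?_
    filter_upwards [hnn] with z hz
    exact Set.indicator_of_mem (Set.mem_Ici.2 (by positivity)) _
  · refine lintegral_congr fun z => ?_
    simp [hG, Set.indicator_apply]

/-- `ν` differs from the symmetrised tail only by the mass `1/2` at the origin. -/
lemma nuFun_add_half_eq (μ : Measure ℝ) [IsProbabilityMeasure μ]
    (hlat : μ (Set.range (fun n : ℕ => (n : ℝ)))ᶜ = 0) (w : ℝ) :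
    nuFun μ w + (if w = 0 then 1 / 2 else 0) = μ {w} / 2 + μ (Set.Ioi w) := by
  by_cases hw : w = 0
  · subst hw
    have h1 : μ {(0 : ℝ)} + μ (Set.Ioi 0) = 1 := by
      rw [← measure_union (by simp) measurableSet_Ioi, ← prob_compl_eq_zero_iff
        ((measurableSet_singleton _).union measurableSet_Ioi)]
      refine measure_mono_null (Set.compl_subset_compl.2 ?_) hlat
      rintro _ ⟨n, rfl⟩
      rcases Nat.eq_zero_or_pos n with h | h
      · simp [h]
      · right; simpa using h
    have h2 : 1 - μ {(0 : ℝ)} = μ (Set.Ioi 0) := by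
      rw [← h1, ENNReal.add_sub_cancel_left (measure_ne_top _ _)]
    simp only [nuFun, if_true, h2]
    rw [← h1, ENNReal.add_div]
    conv_rhs => rw [← ENNReal.add_halves (μ (Set.Ioi 0))]
    ring
  · simp [nuFun, hw]

lemma nuFun_mul_reflTransKernel_eq_zero_of_notMem (μ : Measure ℝ) [IsProbabilityMeasure μ]
    (hlat : μ (Set.range (fun n : ℕ => (n : ℝ)))ᶜ = 0) (d : ℕ)
    (hd1 : ∀ n : ℕ, μ {(n : ℝ)} ≠ 0 → d ∣ n) (x₀ : ℝ) {x w : ℝ}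
    (hx : x ∈ essClass μ d x₀) (hw0 : 0 ≤ w) (hw : w ∉ essClass μ d x₀) :
    nuFun μ w * reflTransKernel μ w x = 0 := by
  by_contra hne
  obtain ⟨hν, hp⟩ := mul_ne_zero_iff.1 hne
  refine hw ⟨hw0, ?_, fun u hu => ?_⟩
  · obtain ⟨-, ⟨k, hk⟩, -⟩ := hx
    have hjump : μ {w - x} ≠ 0 ∨ μ {w + x} ≠ 0 := by
      by_contra! h
      apply hp
      unfold reflTransKernel
      split_ifs with h0
      · simpa [h0] using h.1
      · exact h.2
      · simp [h.1, h.2]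
    rcases hjump with h | h <;>
    · obtain ⟨n, hn⟩ := exists_nat_of_singleton_ne_zero μ hlat h
      obtain ⟨m, rfl⟩ := hd1 n (by rwa [hn])
      push_cast at hn
      first
      | refine ⟨m + k, ?_⟩
        push_cast
        rcases hk with hk | hk
        · left; linear_combination hk - hn
        · right; linear_combination hk - hn
      | refine ⟨m - k, ?_⟩
        push_cast
        rcases hk with hk | hk
        · right; linear_combination -hk - hn
        · left; linear_combination -hk - hn
  · by_contra! hlt
    have hnull : μ (Set.Ici w) = 0 := by
      rw [← lintegral_indicator_one measurableSet_Ici,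
        ← tsum_mul_singleton_eq_lintegral μ hlat, ENNReal.tsum_eq_zero]
      intro z
      by_cases hz : w ≤ z
      · have : μ {z} = 0 := by
          by_contra hz0
          obtain ⟨n, rfl⟩ := exists_nat_of_singleton_ne_zero μ hlat hz0
          linarith [hu n hz0]
        simp [this]
      · simp [hz]
    have h1 : μ {w} = 0 := measure_mono_null (by simp) hnull
    have h2 : μ (Set.Ioi w) = 0 := measure_mono_null Set.Ioi_subset_Ici_self hnull
    have h3 := nuFun_add_half_eq μ hlat w
    rw [h1, h2] at h3
    simp at h3
    exact hν h3.1

lemma tsum_Ici_nuFun_mul_reflTransKernel (μ : Measure ℝ) [IsProbabilityMeasure μ]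
    (hlat : μ (Set.range (fun n : ℕ => (n : ℝ)))ᶜ = 0) {x : ℝ} (hx : 0 ≤ x) :
    ∑' w : ℝ, (Set.Ici (0 : ℝ)).indicator (fun w => nuFun μ w * reflTransKernel μ w x) w =
      nuFun μ x := by
  have hneg : ∀ {t : ℝ}, t < 0 → μ {t} = 0 := by
    intro t ht
    by_contra h
    obtain ⟨n, rfl⟩ := exists_nat_of_singleton_ne_zero μ hlat h
    exact absurd ht (by simp)
  have hatom : ∑' w : ℝ, (if w = 0 then μ {x} / 2 else 0) = μ {x} / 2 := tsum_ite_eq 0 _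
  have hsplit : ∑' w : ℝ, (Set.Ici (0 : ℝ)).indicator
        (fun w => nuFun μ w * reflTransKernel μ w x) w + μ {x} / 2 =
      ∑' w : ℝ, (Set.Ici (0 : ℝ)).indicator (fun w => μ {w} / 2 + μ (Set.Ioi w)) w *
        reflTransKernel μ w x := by
    conv_lhs => rw [← hatom]
    rw [← ENNReal.tsum_add]
    refine tsum_congr fun w => ?_
    by_cases hw : 0 ≤ w
    · rw [Set.indicator_of_mem (Set.mem_Ici.2 hw), Set.indicator_of_mem (Set.mem_Ici.2 hw),
        ← nuFun_add_half_eq μ hlat w, add_mul]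
      congr 1
      by_cases h0 : w = 0
      · subst h0
        have : reflTransKernel μ 0 x = μ {x} := by
          rcases hx.eq_or_lt with h | h
          · simp [reflTransKernel, ← h]
          · simp [reflTransKernel, h.ne', h]
        simp [this, ENNReal.div_eq_inv_mul]
      · simp [h0]
    · have h0 : w ≠ 0 := by rintro rfl; exact hw le_rfl
      simp [hw, h0]
  have hjumps := tsum_tail_mul_jumps μ hlat hx
  have hfin : μ {x} / 2 ≠ ∞ := ENNReal.div_ne_top (measure_ne_top _ _) (by simp)
  rw [← ENNReal.add_left_inj hfin, hsplit]
  rcases hx.eq_or_lt with h | h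
  · subst h
    have hone : μ (Set.Ici (0 : ℝ)) = 1 := by
      rw [← prob_compl_eq_zero_iff measurableSet_Ici]
      refine measure_mono_null (Set.compl_subset_compl.2 ?_) hlat
      rintro _ ⟨n, rfl⟩
      simp
    have hhalf : nuFun μ 0 + μ {(0 : ℝ)} / 2 = 1 / 2 := by
      simp only [nuFun, if_true]
      rw [← ENNReal.add_div, tsub_add_cancel_of_le prob_le_one]
    rw [hhalf]
    simp only [sub_zero, add_zero, ← two_mul, reflTransKernel, if_true] at hjumps ⊢
    simp_rw [mul_left_comm _ (2 : ℝ≥0∞)] at hjumps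
    rw [ENNReal.tsum_mul_left, hone] at hjumps
    rw [ENNReal.eq_div_iff (by simp) (by simp), hjumps]
  · have hν : nuFun μ x + μ {x} / 2 = μ (Set.Ici x) := by
      have hIci : μ (Set.Ici x) = μ {x} + μ (Set.Ioi x) := by
        rw [← measure_union (by simp) measurableSet_Ioi]
        congr 1
        ext y
        simp [le_iff_eq_or_lt]
      rw [hIci, nuFun, if_neg h.ne']
      conv_rhs => rw [← ENNReal.add_halves (μ {x})]
      ring
    rw [hν, ← hjumps]
    refine tsum_congr fun w => ?_
    congr 1
    simp only [reflTransKernel, if_neg h.ne']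
    split_ifs with hw
    · rw [hneg (sub_neg.2 hw), zero_add]
    · rfl

/-- In the lattice case, for every starting point `x₀ ≥ 0` and every
`x ∈ C(x₀)`, the measure `ν` satisfies `Σ_{w ∈ C(x₀)} ν({w}) p(w,x) = ν({x})`:
the restriction of `ν` to the essential class `C(x₀)` is an invariant measure for the
reflected random walk on `C(x₀)`. -/
theorem nu_invariant_on_essClass
    (μ : Measure ℝ) [IsProbabilityMeasure μ]
    (hlat : μ (Set.range (fun n : ℕ => (n : ℝ)))ᶜ = 0)
    (hnondeg : μ ≠ Measure.dirac 0)
    (d : ℕ)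
    (hd1 : ∀ n : ℕ, μ {(n : ℝ)} ≠ 0 → d ∣ n)
    (hd2 : ∀ e : ℕ, (∀ n : ℕ, μ {(n : ℝ)} ≠ 0 → e ∣ n) → e ∣ d)
    (x₀ : ℝ) (hx₀ : 0 ≤ x₀) (x : ℝ) (hx : x ∈ essClass μ d x₀) :
    ∑' w : essClass μ d x₀, nuFun μ w * reflTransKernel μ w x = nuFun μ x := by
  rw [← tsum_Ici_nuFun_mul_reflTransKernel μ hlat hx.1,
    tsum_subtype (essClass μ d x₀) (fun w => nuFun μ w * reflTransKernel μ w x)]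
  refine tsum_congr fun w => ?_
  by_cases hw : w ∈ essClass μ d x₀
  · rw [Set.indicator_of_mem hw, Set.indicator_of_mem (Set.mem_Ici.2 hw.1)]
  · rw [Set.indicator_of_notMem hw]
    by_cases hw0 : 0 ≤ w
    · rw [Set.indicator_of_mem (Set.mem_Ici.2 hw0),
        nuFun_mul_reflTransKernel_eq_zero_of_notMem μ hlat d hd1 x₀ hx hw0 hw]
    · rw [Set.indicator_of_notMem (by simpa using hw0)]
end

section
/- For every starting point x_0 ≥ 0, the total mass Σ_{x ∈ C(x_0)} ρ({x}) is finite if and only if Σ_{k=0}^∞ (1 − F_μ(k))² < ∞. In particular, finiteness of this total mass does not depend on the starting point x_0. -/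
open MeasureTheory ProbabilityTheory Filter
open scoped ENNReal

/-- The measure `ρ`: `ρ({0}) = (1 - μ({0}))/2` and
`ρ({x}) = Σ_{k=1}^∞ (μ({x})/2 + μ((x, x+k)) + μ({x+k})/2) μ({k})` for `x > 0`. -/
noncomputable def rhoFun (μ : MeasureTheory.Measure ℝ) (x : ℝ) : ℝ≥0∞ :=
  if x = 0 then (1 - μ {(0 : ℝ)}) / 2
  else ∑' k : ℕ,
    (μ {x} / 2 + μ (Set.Ioo x (x + ((k : ℝ) + 1))) + μ {x + ((k : ℝ) + 1)} / 2) *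
      μ {((k : ℝ) + 1)}


section Lattice

variable {μ : Measure ℝ}

/-- A measure carried by `ℕ` is the sum of its atoms. -/
lemma measure_eq_tsum_nat_atoms (hlat : μ (Set.range (fun n : ℕ => (n : ℝ)))ᶜ = 0) (A : Set ℝ) :
    μ A = ∑' n : ℕ, A.indicator (fun x => μ {x}) (n : ℝ) := by
  have hunion : A ∩ Set.range (fun n : ℕ => (n : ℝ)) = ⋃ n : ℕ, A ∩ {(n : ℝ)} := by
    ext x
    simp [eq_comm]
  rw [← measure_inter_conull (s := A) hlat, hunion, measure_iUnion]
  · refine tsum_congr fun n => ?_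
    by_cases h : (n : ℝ) ∈ A
    · rw [Set.indicator_of_mem h, Set.inter_eq_right.2 (Set.singleton_subset_iff.2 h)]
    · rw [Set.indicator_of_notMem h, Set.inter_singleton_eq_empty.2 h, measure_empty]
  · intro m n hmn
    refine Set.disjoint_left.2 fun x hx hy => hmn ?_
    have h : (m : ℝ) = n := by rw [← hx.2, ← hy.2]
    exact_mod_cast h
  · intro n
    rcases em ((n : ℝ) ∈ A) with h | h
    · rw [Set.inter_eq_right.2 (Set.singleton_subset_iff.2 h)]
      exact measurableSet_singleton _
    · rw [Set.inter_singleton_eq_empty.2 h]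
      exact MeasurableSet.empty

lemma measure_eq_tsum_mul_indicator (hlat : μ (Set.range (fun n : ℕ => (n : ℝ)))ᶜ = 0)
    (A : Set ℝ) : μ A = ∑' n : ℕ, μ {(n : ℝ)} * A.indicator 1 (n : ℝ) := by
  rw [measure_eq_tsum_nat_atoms hlat A]
  refine tsum_congr fun n => ?_
  by_cases h : (n : ℝ) ∈ A <;> simp [h]

lemma tsum_nat_atoms [IsProbabilityMeasure μ]
    (hlat : μ (Set.range (fun n : ℕ => (n : ℝ)))ᶜ = 0) : ∑' n : ℕ, μ {(n : ℝ)} = 1 := by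
  have h := measure_eq_tsum_nat_atoms hlat Set.univ
  simpa using h.symm

/-- If all positive atoms vanish, the measure is the Dirac mass at `0`. -/
lemma eq_dirac_zero_of_atoms [IsProbabilityMeasure μ]
    (hlat : μ (Set.range (fun n : ℕ => (n : ℝ)))ᶜ = 0)
    (h0 : ∀ n : ℕ, μ {(n : ℝ)} ≠ 0 → n = 0) : μ = Measure.dirac 0 := by
  have hz : ∀ n : ℕ, n ≠ 0 → μ {(n : ℝ)} = 0 := fun n hn => by
    by_contra h
    exact hn (h0 n h)
  have h1 : μ {(0 : ℝ)} = 1 := by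
    have h := tsum_nat_atoms hlat
    rwa [tsum_eq_single 0 hz, Nat.cast_zero] at h
  ext A hA
  rw [Measure.dirac_apply' _ hA, measure_eq_tsum_mul_indicator hlat,
    tsum_eq_single 0 fun n hn => by rw [hz n hn, zero_mul], Nat.cast_zero, h1, one_mul]

lemma tsum_indicator_Ioi_mul_indicator_Ioi (j k : ℕ) :
    ∑' m : ℕ, (Set.Ioi (m : ℝ)).indicator (1 : ℝ → ℝ≥0∞) j *
      (Set.Ioi (m : ℝ)).indicator (1 : ℝ → ℝ≥0∞) k = (min j k : ℕ) := by
  have h : ∀ m : ℕ, (Set.Ioi (m : ℝ)).indicator (1 : ℝ → ℝ≥0∞) j *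
      (Set.Ioi (m : ℝ)).indicator (1 : ℝ → ℝ≥0∞) k =
      if m ∈ Finset.range (min j k) then 1 else 0 := fun m => by
    by_cases hj : m < j <;> by_cases hk : m < k <;> simp [hj, hk]
  simp_rw [h]
  rw [tsum_eq_sum (s := Finset.range (min j k)) fun m hm => by simp only [hm, if_false]]
  rw [Finset.sum_congr rfl fun m hm => if_pos hm]
  simp

/-- `Σ μ((m, ∞))²` is the expected minimum of two independent copies. -/
lemma tsum_sq_tail_eq (hlat : μ (Set.range (fun n : ℕ => (n : ℝ)))ᶜ = 0) :
    ∑' m : ℕ, (μ (Set.Ioi (m : ℝ))) ^ 2 =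
      ∑' k : ℕ, ∑' j : ℕ, μ {(k : ℝ)} * μ {(j : ℝ)} * (min j k : ℕ) := by
  have h : ∀ m : ℕ, (μ (Set.Ioi (m : ℝ))) ^ 2 = ∑' k : ℕ, ∑' j : ℕ,
      μ {(k : ℝ)} * μ {(j : ℝ)} * ((Set.Ioi (m : ℝ)).indicator (1 : ℝ → ℝ≥0∞) j *
      (Set.Ioi (m : ℝ)).indicator (1 : ℝ → ℝ≥0∞) k) := fun m => by
    rw [sq, measure_eq_tsum_mul_indicator hlat, ← ENNReal.tsum_mul_right]
    refine tsum_congr fun k => ?_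
    rw [← ENNReal.tsum_mul_left]
    refine tsum_congr fun j => ?_
    ring
  simp_rw [h]
  rw [ENNReal.tsum_comm]
  refine tsum_congr fun k => ?_
  rw [ENNReal.tsum_comm]
  refine tsum_congr fun j => ?_
  rw [ENNReal.tsum_mul_left, tsum_indicator_Ioi_mul_indicator_Ioi]

/-- The analogue of `rhoFun` with full weight at both endpoints. -/
noncomputable def closedRho (μ : Measure ℝ) (x : ℝ) : ℝ≥0∞ :=
  ∑' k : ℕ, μ {(k + 1 : ℝ)} * μ (Set.Icc x (x + (k + 1)))

lemma rhoFun_le_closedRho_add [IsProbabilityMeasure μ] (x : ℝ) :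
    rhoFun μ x ≤ closedRho μ x + if x = 0 then 1 else 0 := by
  unfold rhoFun closedRho
  split_ifs with hx
  · refine le_add_left (ENNReal.div_le_of_le_mul ?_)
    exact tsub_le_self.trans (by norm_num)
  · rw [add_zero]
    refine ENNReal.tsum_le_tsum fun k => ?_
    rw [mul_comm]
    refine mul_le_mul_right ?_ _
    have hk : x < x + ((k : ℝ) + 1) := by linarith [k.cast_nonneg (α := ℝ)]
    calc μ {x} / 2 + μ (Set.Ioo x (x + ((k : ℝ) + 1))) + μ {x + ((k : ℝ) + 1)} / 2
        ≤ μ {x} + μ (Set.Ioo x (x + ((k : ℝ) + 1))) + μ {x + ((k : ℝ) + 1)} := by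
          gcongr <;> exact ENNReal.half_le_self
      _ = μ (Set.Icc x (x + ((k : ℝ) + 1))) := by
          rw [← measure_union (by simp) measurableSet_Ioo, Set.singleton_union,
            Set.Ioo_insert_left hk, ← measure_union (by simp) (measurableSet_singleton _),
            Set.union_singleton, Set.Ico_insert_right hk.le]

lemma closedRho_le_two_mul_rhoFun {x : ℝ} (hx : x ≠ 0) : closedRho μ x ≤ 2 * rhoFun μ x := by
  unfold rhoFun closedRho
  rw [if_neg hx, ← ENNReal.tsum_mul_left]
  refine ENNReal.tsum_le_tsum fun k => ?_
  rw [← mul_assoc, mul_comm]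
  refine mul_le_mul_left ?_ _
  have hk : x < x + ((k : ℝ) + 1) := by linarith [k.cast_nonneg (α := ℝ)]
  calc μ (Set.Icc x (x + ((k : ℝ) + 1)))
      ≤ μ {x} + μ (Set.Ioo x (x + ((k : ℝ) + 1))) + μ {x + ((k : ℝ) + 1)} := by
        rw [← Set.Ico_insert_right hk.le, ← Set.union_singleton, ← Set.Ioo_insert_left hk,
          ← Set.singleton_union]
        exact (measure_union_le _ _).trans (by gcongr; exact measure_union_le _ _)
    _ ≤ μ {x} + 2 * μ (Set.Ioo x (x + ((k : ℝ) + 1))) + μ {x + ((k : ℝ) + 1)} := by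
        gcongr
        exact le_mul_of_one_le_left' one_le_two
    _ = 2 * (μ {x} / 2 + μ (Set.Ioo x (x + ((k : ℝ) + 1))) + μ {x + ((k : ℝ) + 1)} / 2) := by
        rw [mul_add, mul_add, ENNReal.mul_div_cancel two_ne_zero ENNReal.ofNat_ne_top,
          ENNReal.mul_div_cancel two_ne_zero ENNReal.ofNat_ne_top]

/-- Summing `closedRho` over an indexed family of points amounts to counting, for each pair of
atoms `j`, `k + 1`, the points `x` of the family with `x ≤ j ≤ x + k + 1`. -/
lemma tsum_closedRho_eq (hlat : μ (Set.range (fun n : ℕ => (n : ℝ)))ᶜ = 0)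
    {ι : Type*} (s : ι → ℝ) :
    ∑' i, closedRho μ (s i) = ∑' k : ℕ, ∑' j : ℕ, μ {(k + 1 : ℝ)} * μ {(j : ℝ)} *
      {i | (j : ℝ) ∈ Set.Icc (s i) (s i + (k + 1))}.encard := by
  unfold closedRho
  rw [ENNReal.tsum_comm]
  refine tsum_congr fun k => ?_
  simp_rw [measure_eq_tsum_mul_indicator hlat (Set.Icc _ _), ← ENNReal.tsum_mul_left]
  rw [ENNReal.tsum_comm]
  refine tsum_congr fun j => ?_
  rw [← ENNReal.tsum_set_one, tsum_subtype _ (fun _ => (1 : ℝ≥0∞)), ← ENNReal.tsum_mul_left]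
  refine tsum_congr fun i => ?_
  rw [mul_assoc]
  congr 2

lemma encard_translates_le (c : ℝ) (j k : ℕ) :
    ({m : ℤ | 0 ≤ (m : ℝ) + c ∧ (j : ℝ) ∈ Set.Icc ((m : ℝ) + c) ((m : ℝ) + c + (k + 1))}.encard :
      ℝ≥0∞) ≤ (min j (k + 1) : ℕ) + 1 := by
  set M := min j (k + 1)
  have hsub : {m : ℤ | 0 ≤ (m : ℝ) + c ∧
      (j : ℝ) ∈ Set.Icc ((m : ℝ) + c) ((m : ℝ) + c + (k + 1))} ⊆
      (Finset.Icc (⌊(j : ℝ) - c⌋ - M) ⌊(j : ℝ) - c⌋ : Finset ℤ) := by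
    rintro m ⟨h0, h1, h2⟩
    simp only [Finset.coe_Icc, Set.mem_Icc]
    refine ⟨?_, Int.le_floor.2 (by linarith)⟩
    rw [sub_le_iff_le_add, ← Int.lt_add_one_iff, Int.floor_lt]
    have hM : (j : ℝ) - c ≤ m + M := by
      rcases min_choice j (k + 1) with h | h
      · rw [show M = j from h]; linarith
      · rw [show M = k + 1 from h]; push_cast; linarith
    push_cast
    linarith
  have hcard := Set.encard_le_encard hsub
  rw [Set.encard_coe_eq_coe_finsetCard, Int.card_Icc,
    show (⌊(j : ℝ) - c⌋ + 1 - (⌊(j : ℝ) - c⌋ - M)).toNat = M + 1 by omega] at hcard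
  have := ENat.toENNReal_le.2 hcard
  simpa using this

lemma encard_essClass_le (d : ℕ) (x₀ : ℝ) (j k : ℕ) :
    ({x : essClass μ d x₀ | (j : ℝ) ∈ Set.Icc (x : ℝ) (x + (k + 1))}.encard : ℝ≥0∞) ≤
      2 * ((min j (k + 1) : ℕ) + 1) := by
  let B : ℝ → Set ℤ := fun c =>
    {m : ℤ | 0 ≤ (m : ℝ) + c ∧ (j : ℝ) ∈ Set.Icc ((m : ℝ) + c) ((m : ℝ) + c + (k + 1))}
  have hsub : Subtype.val '' {x : essClass μ d x₀ | (j : ℝ) ∈ Set.Icc (x : ℝ) (x + (k + 1))} ⊆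
      (fun m : ℤ => (m : ℝ) + x₀) '' B x₀ ∪ (fun m : ℤ => (m : ℝ) + -x₀) '' B (-x₀) := by
    rintro _ ⟨⟨x, h0, ⟨l, hl⟩, _⟩, hx, rfl⟩
    rcases hl with hl | hl
    · have hl' : x = ((l * d : ℤ) : ℝ) + x₀ := by push_cast; exact hl
      refine Or.inl ⟨l * d, ⟨?_, ?_⟩, hl'.symm⟩
      · rwa [← hl']
      · rwa [← hl']
    · have hl' : x = ((l * d : ℤ) : ℝ) + -x₀ := by push_cast; linarith
      refine Or.inr ⟨l * d, ⟨?_, ?_⟩, hl'.symm⟩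
      · rwa [← hl']
      · rwa [← hl']
  have hcard : {x : essClass μ d x₀ | (j : ℝ) ∈ Set.Icc (x : ℝ) (x + (k + 1))}.encard ≤
      (B x₀).encard + (B (-x₀)).encard := by
    rw [← Subtype.val_injective.encard_image]
    refine (Set.encard_le_encard hsub).trans ((Set.encard_union_le _ _).trans ?_)
    exact add_le_add (Set.encard_image_le _ _) (Set.encard_image_le _ _)
  refine (ENat.toENNReal_le.2 hcard).trans ?_
  rw [ENat.toENNReal_add, two_mul]
  exact add_le_add (encard_translates_le _ _ _) (encard_translates_le _ _ _)

lemma min_le_mul_encard_essClass {d : ℕ} (hd : 0 < d) (x₀ : ℝ) {j k : ℕ}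
    (hj : μ {(j : ℝ)} ≠ 0) (hdj : d ∣ j) (hdk : d ∣ k + 1) :
    ((min j (k + 1) : ℕ) : ℝ≥0∞) ≤
      d * {x : {x : ℝ // x ∈ essClass μ d x₀ ∧ x ≠ 0} |
        (j : ℝ) ∈ Set.Icc (x : ℝ) (x + (k + 1))}.encard := by
  obtain ⟨n, hn⟩ : d ∣ min j (k + 1) := by
    rcases min_choice j (k + 1) with h | h <;> rw [h] <;> assumption
  have hnj : d * n ≤ j := hn ▸ min_le_left _ _
  have hnk : d * n ≤ k + 1 := hn ▸ min_le_right _ _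
  obtain ⟨l, rfl⟩ := hdj
  have hd' : (0 : ℝ) < d := by exact_mod_cast hd
  set q : ℤ := ⌈x₀ / d⌉ with hq
  have hq1 : x₀ ≤ q * d := (div_le_iff₀ hd').1 (Int.le_ceil _)
  have hq2 : (q - 1) * d < x₀ := by
    have h := Int.ceil_lt_add_one (x₀ / d)
    rw [← hq, ← sub_lt_iff_lt_add, lt_div_iff₀ hd'] at h
    exact h
  let f : ℕ → ℝ := fun i => ((l - q - i : ℤ) : ℝ) * d + x₀
  have hf : Function.Injective f := fun a b hab => by
    have h : ((l - q - a : ℤ) : ℝ) = ((l - q - b : ℤ) : ℝ) :=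
      mul_right_cancel₀ hd'.ne' (add_right_cancel hab)
    have h' : (l - q - a : ℤ) = l - q - b := by exact_mod_cast h
    omega
  have hnj' : (d : ℝ) * n ≤ d * l := by exact_mod_cast hnj
  have hnk' : (d : ℝ) * n ≤ k + 1 := by exact_mod_cast hnk
  have hlow : ∀ i < n, (d : ℝ) * l - d * n < f i := fun i hi => by
    have h : (i : ℝ) + 1 ≤ n := by exact_mod_cast hi
    have := mul_le_mul_of_nonneg_left h hd'.le
    simp only [f]
    push_cast
    nlinarith
  have hup : ∀ i, f i ≤ d * l := fun i => by
    have := mul_nonneg hd'.le i.cast_nonneg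
    simp only [f]
    push_cast
    nlinarith
  have hsub : f '' (Finset.range n : Set ℕ) ⊆
      Subtype.val '' {x : {x : ℝ // x ∈ essClass μ d x₀ ∧ x ≠ 0} |
        ((d * l : ℕ) : ℝ) ∈ Set.Icc (x : ℝ) (x + (k + 1))} := by
    rintro _ ⟨i, hi, rfl⟩
    have hi := hlow i (Finset.mem_range.1 hi)
    have hpos : 0 < f i := by linarith
    refine ⟨⟨f i, ⟨hpos.le, ⟨l - q - i, Or.inl rfl⟩, fun u hu => ?_⟩, hpos.ne'⟩, ⟨?_, ?_⟩, rfl⟩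
    · refine (hup i).trans ?_
      exact_mod_cast hu _ hj
    · push_cast
      exact hup i
    · push_cast
      linarith
  have hcard := Set.encard_le_encard hsub
  rw [hf.encard_image, Subtype.val_injective.encard_image, Set.encard_coe_eq_coe_finsetCard,
    Finset.card_range] at hcard
  rw [hn, Nat.cast_mul]
  gcongr
  simpa using ENat.toENNReal_le.2 hcard

lemma tsum_sq_tail_eq_tsum_succ (hlat : μ (Set.range (fun n : ℕ => (n : ℝ)))ᶜ = 0) :
    ∑' m : ℕ, (μ (Set.Ioi (m : ℝ))) ^ 2 =
      ∑' k : ℕ, ∑' j : ℕ, μ {(k + 1 : ℝ)} * μ {(j : ℝ)} * (min j (k + 1) : ℕ) := by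
  rw [tsum_sq_tail_eq hlat, tsum_eq_zero_add' ENNReal.summable]
  simp

lemma tsum_closedRho_essClass_le [IsProbabilityMeasure μ]
    (hlat : μ (Set.range (fun n : ℕ => (n : ℝ)))ᶜ = 0) (d : ℕ) (x₀ : ℝ) :
    ∑' x : essClass μ d x₀, closedRho μ x ≤
      2 * (∑' m : ℕ, (μ (Set.Ioi (m : ℝ))) ^ 2 + 1) := by
  have hmass : ∑' k : ℕ, ∑' j : ℕ, μ {(k + 1 : ℝ)} * μ {(j : ℝ)} ≤ 1 := by
    simp_rw [ENNReal.tsum_mul_left, tsum_nat_atoms hlat, mul_one]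
    rw [← tsum_nat_atoms hlat, tsum_eq_zero_add' (f := fun n : ℕ => μ {(n : ℝ)}) ENNReal.summable]
    push_cast
    exact le_add_self
  calc ∑' x : essClass μ d x₀, closedRho μ x
      ≤ ∑' k : ℕ, ∑' j : ℕ, μ {(k + 1 : ℝ)} * μ {(j : ℝ)} * (2 * ((min j (k + 1) : ℕ) + 1)) := by
        rw [tsum_closedRho_eq hlat]
        exact ENNReal.tsum_le_tsum fun k => ENNReal.tsum_le_tsum fun j =>
          mul_le_mul_right (encard_essClass_le d x₀ j k) _
    _ = 2 * (∑' m : ℕ, (μ (Set.Ioi (m : ℝ))) ^ 2 +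
          ∑' k : ℕ, ∑' j : ℕ, μ {(k + 1 : ℝ)} * μ {(j : ℝ)}) := by
        simp_rw [tsum_sq_tail_eq_tsum_succ hlat, ← ENNReal.tsum_add, ← ENNReal.tsum_mul_left]
        refine tsum_congr fun k => tsum_congr fun j => ?_
        ring
    _ ≤ 2 * (∑' m : ℕ, (μ (Set.Ioi (m : ℝ))) ^ 2 + 1) := by gcongr

lemma tsum_sq_tail_le (hlat : μ (Set.range (fun n : ℕ => (n : ℝ)))ᶜ = 0) {d : ℕ} (hd : 0 < d)
    (hdvd : ∀ n : ℕ, μ {(n : ℝ)} ≠ 0 → d ∣ n) (x₀ : ℝ) :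
    ∑' m : ℕ, (μ (Set.Ioi (m : ℝ))) ^ 2 ≤
      d * ∑' x : {x : ℝ // x ∈ essClass μ d x₀ ∧ x ≠ 0}, closedRho μ x := by
  rw [tsum_sq_tail_eq_tsum_succ hlat, tsum_closedRho_eq hlat, ← ENNReal.tsum_mul_left]
  refine ENNReal.tsum_le_tsum fun k => ?_
  rw [← ENNReal.tsum_mul_left]
  refine ENNReal.tsum_le_tsum fun j => ?_
  rw [mul_left_comm]
  by_cases hj : μ {(j : ℝ)} = 0
  · simp [hj]
  by_cases hk : μ {(k + 1 : ℝ)} = 0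
  · simp [hk]
  exact mul_le_mul_right
    (min_le_mul_encard_essClass hd x₀ hj (hdvd j hj) (hdvd (k + 1) (by exact_mod_cast hk))) _

end Lattice

/-- In the lattice case, for every starting point `x₀ ≥ 0`, the total
mass `Σ_{x ∈ C(x₀)} ρ({x})` is finite if and only if
`Σ_{k=0}^∞ (1 - F_μ(k))² < ∞` (where `1 - F_μ(k) = μ((k,∞))`); in particular this does
not depend on the starting point `x₀`. -/
theorem rho_finite_mass_iff_quadratic_tail
    (μ : Measure ℝ) [IsProbabilityMeasure μ]
    (hlat : μ (Set.range (fun n : ℕ => (n : ℝ)))ᶜ = 0)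
    (hnondeg : μ ≠ Measure.dirac 0)
    (d : ℕ)
    (hd1 : ∀ n : ℕ, μ {(n : ℝ)} ≠ 0 → d ∣ n)
    (hd2 : ∀ e : ℕ, (∀ n : ℕ, μ {(n : ℝ)} ≠ 0 → e ∣ n) → e ∣ d)
    (x₀ : ℝ) (hx₀ : 0 ≤ x₀) :
    (∑' x : essClass μ d x₀, rhoFun μ x) < ⊤ ↔
      (∑' k : ℕ, (μ (Set.Ioi (k : ℝ))) ^ 2) < ⊤ := by
  have hd : 0 < d := Nat.pos_of_ne_zero fun h => hnondeg <|
    eq_dirac_zero_of_atoms hlat fun n hn => Nat.eq_zero_of_zero_dvd (h ▸ hd1 n hn)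
  constructor
  · intro h
    refine (tsum_sq_tail_le hlat hd hd1 x₀).trans_lt
      (ENNReal.mul_lt_top (ENNReal.natCast_lt_top d) ?_)
    calc ∑' x : {x : ℝ // x ∈ essClass μ d x₀ ∧ x ≠ 0}, closedRho μ x
        ≤ ∑' x : {x : ℝ // x ∈ essClass μ d x₀ ∧ x ≠ 0}, 2 * rhoFun μ x :=
          ENNReal.tsum_le_tsum fun x => closedRho_le_two_mul_rhoFun x.2.2
      _ ≤ 2 * ∑' x : essClass μ d x₀, rhoFun μ x := by
          rw [ENNReal.tsum_mul_left]
          gcongr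
          exact ENNReal.tsum_mono_subtype (rhoFun μ) (s := {x | x ∈ essClass μ d x₀ ∧ x ≠ 0})
            fun x hx => hx.1
      _ < ⊤ := ENNReal.mul_lt_top ENNReal.ofNat_lt_top h
  · intro h
    calc ∑' x : essClass μ d x₀, rhoFun μ x
        ≤ ∑' x : essClass μ d x₀, (closedRho μ x + if (x : ℝ) = 0 then 1 else 0) :=
          ENNReal.tsum_le_tsum fun x => rhoFun_le_closedRho_add _
      _ ≤ 2 * (∑' m : ℕ, (μ (Set.Ioi (m : ℝ))) ^ 2 + 1) + 1 := by
          rw [ENNReal.tsum_add]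
          refine add_le_add (tsum_closedRho_essClass_le hlat d x₀) ?_
          refine (ENNReal.tsum_comp_le_tsum_of_injective Subtype.val_injective
            fun x : ℝ => if x = 0 then 1 else 0).trans_eq ?_
          exact tsum_ite_eq 0 fun _ => 1
      _ < ⊤ := by finiteness
end

section
/- If Σ_{k≥0} √k · μ({k}) < ∞, then Σ_{n=0}^∞ (1 − F_μ(n))² ≤ ( Σ_{k≥0} √k · μ({k}) )² < ∞; that is, a finite moment of order 1/2 implies the quadratic tail condition. -/
open MeasureTheory Filter
open scoped ENNReal

/-- A measure carried by `ℕ` assigns to `(n, ∞)` at most the sum of its atoms beyond `n`. -/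
lemma measure_Ioi_le_tsum_atoms (μ : Measure ℝ)
    (hlat : μ (Set.range (fun n : ℕ => (n : ℝ)))ᶜ = 0) (n : ℕ) :
    μ (Set.Ioi (n : ℝ)) ≤ ∑' k : ℕ, if n < k then μ {(k : ℝ)} else 0 := by
  have hsub : Set.Ioi (n : ℝ) ⊆ (Set.range (fun n : ℕ => (n : ℝ)))ᶜ ∪
      ⋃ k : ℕ, (if n < k then {(k : ℝ)} else ∅ : Set ℝ) := by
    intro x hx
    by_cases hxr : x ∈ Set.range (fun n : ℕ => (n : ℝ))
    · obtain ⟨k, rfl⟩ := hxr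
      have hk : n < k := by simpa using hx
      exact Or.inr (Set.mem_iUnion.2 ⟨k, by simp [hk]⟩)
    · exact Or.inl hxr
  calc μ (Set.Ioi (n : ℝ))
      ≤ μ (Set.range (fun n : ℕ => (n : ℝ)))ᶜ +
          μ (⋃ k : ℕ, (if n < k then {(k : ℝ)} else ∅ : Set ℝ)) :=
        (measure_mono hsub).trans (measure_union_le _ _)
    _ ≤ ∑' k : ℕ, μ (if n < k then {(k : ℝ)} else ∅ : Set ℝ) := by
        rw [hlat, zero_add]
        exact measure_iUnion_le _
    _ = ∑' k : ℕ, if n < k then μ {(k : ℝ)} else 0 := by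
        refine tsum_congr fun k => ?_
        split_ifs <;> simp

/-- The minimum of two natural numbers is at most their geometric mean. -/
lemma natCast_min_le_sqrt_mul_sqrt (j k : ℕ) :
    ((min j k : ℕ) : ℝ≥0∞) ≤ ENNReal.ofReal (Real.sqrt j) * ENNReal.ofReal (Real.sqrt k) := by
  rw [← ENNReal.ofReal_mul (Real.sqrt_nonneg _), ← ENNReal.ofReal_natCast]
  refine ENNReal.ofReal_le_ofReal ?_
  rw [← Real.mul_self_sqrt (Nat.cast_nonneg (min j k))]
  gcongr
  · exact min_le_left j k
  · exact min_le_right j k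

/-- The number of `n` lying below both `j` and `k` is `min j k`. -/
lemma tsum_ite_lt_mul_ite_lt (a b : ℝ≥0∞) (j k : ℕ) :
    ∑' n : ℕ, (if n < j then a else 0) * (if n < k then b else 0) =
      ((min j k : ℕ) : ℝ≥0∞) * (a * b) := by
  have hterm : ∀ n : ℕ, (if n < j then a else 0) * (if n < k then b else 0) =
      if n ∈ Finset.range (min j k) then a * b else 0 := by
    intro n
    by_cases hj : n < j <;> by_cases hk : n < k <;> simp [hj, hk]
  rw [tsum_congr hterm, tsum_eq_sum (s := Finset.range (min j k)) (fun n hn => if_neg hn),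
    Finset.sum_congr rfl (fun n hn => if_pos hn)]
  simp

lemma ENNReal.tsum_sq (f : ℕ → ℝ≥0∞) : (∑' k, f k) ^ 2 = ∑' j, ∑' k, f j * f k := by
  simp_rw [sq, ENNReal.tsum_mul_left, ENNReal.tsum_mul_right]

/-- The sum of the squared tails of `p` is at most the squared moment of order `1/2`. -/
lemma tsum_sq_tail_le_sq_tsum_sqrt_mul (p : ℕ → ℝ≥0∞) :
    ∑' n : ℕ, (∑' k : ℕ, if n < k then p k else 0) ^ 2 ≤
      (∑' k : ℕ, ENNReal.ofReal (Real.sqrt k) * p k) ^ 2 := by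
  simp_rw [ENNReal.tsum_sq]
  rw [ENNReal.tsum_comm]
  refine ENNReal.tsum_le_tsum fun j => ?_
  rw [ENNReal.tsum_comm]
  refine ENNReal.tsum_le_tsum fun k => ?_
  rw [tsum_ite_lt_mul_ite_lt, mul_mul_mul_comm]
  gcongr
  exact natCast_min_le_sqrt_mul_sqrt j k

/-- For a probability measure `μ` on `ℕ₀` (viewed on `ℝ`), if
`Σ_k √k μ({k}) < ∞` then `Σ_n (1 - F_μ(n))² ≤ (Σ_k √k μ({k}))² < ∞`: a finite moment of
order `1/2` implies the quadratic tail condition. Here `1 - F_μ(n) = μ((n,∞))`. -/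
theorem half_moment_implies_quadratic_tail
    (μ : Measure ℝ) [IsProbabilityMeasure μ]
    (hlat : μ (Set.range (fun n : ℕ => (n : ℝ)))ᶜ = 0)
    (hmom : (∑' k : ℕ, ENNReal.ofReal (Real.sqrt k) * μ {(k : ℝ)}) < ⊤) :
    (∑' n : ℕ, (μ (Set.Ioi (n : ℝ))) ^ 2) ≤
        (∑' k : ℕ, ENNReal.ofReal (Real.sqrt k) * μ {(k : ℝ)}) ^ 2 ∧
      (∑' n : ℕ, (μ (Set.Ioi (n : ℝ))) ^ 2) < ⊤ := by
  have hle : (∑' n : ℕ, (μ (Set.Ioi (n : ℝ))) ^ 2) ≤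
      (∑' k : ℕ, ENNReal.ofReal (Real.sqrt k) * μ {(k : ℝ)}) ^ 2 :=
    (ENNReal.tsum_le_tsum fun n => pow_le_pow_left' (measure_Ioi_le_tsum_atoms μ hlat n) 2).trans
      (tsum_sq_tail_le_sq_tsum_sqrt_mul fun k => μ {(k : ℝ)})
  exact ⟨hle, hle.trans_lt (ENNReal.pow_lt_top hmom)⟩
end

section
/- The measure ν(dx) = (1 − F_μ(x)) dx on C (where dx is Lebesgue measure) is an invariant measure for the transition kernel p of the reflected random walk: for every Borel set B ⊆ [0,∞), ∫_{[0,∞)} p(x,B) (1 − F_μ(x)) dx = ∫_B (1 − F_μ(x)) dx. -/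
open MeasureTheory Filter
open scoped ENNReal

/-- The Lebesgue measure of the heights `x ∈ [0, z)` whose distance to `y` lies in `B`. -/
noncomputable def reflectedVolume (B : Set ℝ) (y z : ℝ) : ℝ≥0∞ :=
  volume {x : ℝ | 0 ≤ x ∧ x < z ∧ |x - y| ∈ B}

lemma volume_reflect_preimage {A : Set ℝ} (hA : MeasurableSet A) (a : ℝ) :
    volume {x : ℝ | a - x ∈ A} = volume A :=
  (Measure.measurePreserving_sub_left volume a).measure_preimage hA.nullMeasurableSet

lemma volume_shift_preimage {A : Set ℝ} (hA : MeasurableSet A) (a : ℝ) :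
    volume {x : ℝ | x - a ∈ A} = volume A :=
  (measurePreserving_sub_right volume a).measure_preimage hA.nullMeasurableSet

lemma reflectedVolume_of_ge {B : Set ℝ} (hB : MeasurableSet B) {y z : ℝ} (hzy : z ≤ y) :
    reflectedVolume B y z = volume (B ∩ Set.Ioc (y - z) y) := by
  rw [← volume_reflect_preimage (hB.inter measurableSet_Ioc) y, reflectedVolume]
  congr 1
  ext x
  simp only [Set.mem_ofPred_eq, Set.mem_inter_iff, Set.mem_Ioc]
  constructor
  · rintro ⟨h0, h1, h2⟩
    rw [abs_of_nonpos (by linarith), neg_sub] at h2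
    exact ⟨h2, by linarith, by linarith⟩
  · rintro ⟨h2, h1, h0⟩
    rw [abs_of_nonpos (by linarith), neg_sub]
    exact ⟨by linarith, by linarith, h2⟩

lemma reflectedVolume_of_le {B : Set ℝ} (hB : MeasurableSet B) {y z : ℝ} (hy : 0 ≤ y)
    (hyz : y ≤ z) :
    reflectedVolume B y z =
      volume (B ∩ Set.Ioc 0 y) + volume (B ∩ Set.Ico 0 (z - y)) := by
  rw [← volume_shift_preimage (hB.inter measurableSet_Ico) y]
  have hrefl := reflectedVolume_of_ge hB (le_refl y)
  rw [sub_self] at hrefl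
  rw [← hrefl, reflectedVolume, reflectedVolume, ← measure_union]
  · congr 1
    ext x
    simp only [Set.mem_ofPred_eq, Set.mem_union, Set.mem_inter_iff, Set.mem_Ico]
    rcases lt_or_ge x y with h | h
    · have : ¬ 0 ≤ x - y := by linarith
      have : x < z := by linarith
      tauto
    · rw [abs_of_nonneg (sub_nonneg.2 h)]
      have : 0 ≤ x := by linarith
      have : 0 ≤ x - y := by linarith
      have : x - y < z - y ↔ x < z := by simp
      have : ¬ x < y := by linarith
      tauto
  · refine Set.disjoint_left.2 fun x hx hx' => ?_
    have h1 : x < y := hx.2.1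
    have h2 : 0 ≤ x - y := hx'.2.1
    linarith
  · exact (measurable_id.sub_const y) (hB.inter measurableSet_Ico)

lemma reflectedVolume_add_swap_of_le {B : Set ℝ} (hB : MeasurableSet B) {y z : ℝ} (hy : 0 ≤ y)
    (hyz : y ≤ z) :
    reflectedVolume B y z + reflectedVolume B z y =
      volume (B ∩ Set.Ioc 0 y) + volume (B ∩ Set.Ioc 0 z) := by
  rw [reflectedVolume_of_le hB hy hyz, reflectedVolume_of_ge hB hyz, add_assoc]
  have hIco : volume (B ∩ Set.Ico 0 (z - y)) = volume (B ∩ Set.Ioc 0 (z - y)) :=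
    measure_congr ((ae_eq_refl B).inter Ico_ae_eq_Ioc)
  rw [hIco, ← measure_union _ (hB.inter measurableSet_Ioc), ← Set.inter_union_distrib_left,
    Set.Ioc_union_Ioc_eq_Ioc (by linarith) (by linarith)]
  refine Set.disjoint_left.2 fun x hx hx' => ?_
  exact absurd hx.2.2 (not_le.2 hx'.2.1)

lemma reflectedVolume_add_swap {B : Set ℝ} (hB : MeasurableSet B) {y z : ℝ} (hy : 0 ≤ y)
    (hz : 0 ≤ z) :
    reflectedVolume B y z + reflectedVolume B z y =
      volume (B ∩ Set.Ioc 0 y) + volume (B ∩ Set.Ioc 0 z) := by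
  rcases le_total y z with h | h
  · exact reflectedVolume_add_swap_of_le hB hy h
  · rw [add_comm, reflectedVolume_add_swap_of_le hB hz h, add_comm]

lemma volume_inter_Ioc_eq {B : Set ℝ} (hBpos : B ⊆ Set.Ici 0) (y : ℝ) :
    volume (B ∩ Set.Ioc 0 y) = volume (B ∩ Set.Iio y) := by
  have h : B ∩ Set.Iio y = B ∩ Set.Ico 0 y := by
    ext x
    exact ⟨fun hx => ⟨hx.1, hBpos hx.1, hx.2⟩, fun hx => ⟨hx.1, hx.2.2⟩⟩
  rw [h]
  exact measure_congr ((ae_eq_refl B).inter Ico_ae_eq_Ioc.symm)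

lemma measurableSet_dist_mem {B : Set ℝ} (hB : MeasurableSet B) :
    MeasurableSet {q : ℝ × (ℝ × ℝ) | |q.1 - q.2.1| ∈ B ∧ q.1 < q.2.2} := by
  have h1 : Measurable fun q : ℝ × (ℝ × ℝ) => |q.1 - q.2.1| := by fun_prop
  exact (h1 hB).inter (measurableSet_lt measurable_fst (measurable_snd.comp measurable_snd))

lemma restrict_dist_mem (B : Set ℝ) (y z : ℝ) :
    volume.restrict (Set.Ici 0) {x : ℝ | |x - y| ∈ B ∧ x < z} = reflectedVolume B y z := by
  rw [Measure.restrict_apply' measurableSet_Ici, reflectedVolume]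
  congr 1
  ext x
  simp only [Set.mem_inter_iff, Set.mem_ofPred_eq, Set.mem_Ici]
  tauto

lemma measurable_reflectedVolume {B : Set ℝ} (hB : MeasurableSet B) :
    Measurable fun p : ℝ × ℝ => reflectedVolume B p.1 p.2 := by
  simp_rw [← restrict_dist_mem]
  exact measurable_measure_prodMk_right (measurableSet_dist_mem hB)

/-- Tonelli: one step of the walk from `ν` as a double integral over two independent increments. -/
lemma lintegral_step_eq (μ : Measure ℝ) [SFinite μ] {B : Set ℝ} (hB : MeasurableSet B) :
    ∫⁻ x in Set.Ici (0 : ℝ), μ {y : ℝ | |x - y| ∈ B} * μ (Set.Ioi x) =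
      ∫⁻ p, reflectedVolume B p.1 p.2 ∂(μ.prod μ) := by
  simp_rw [← Measure.prod_prod, ← restrict_dist_mem]
  exact (Measure.prod_apply (measurableSet_dist_mem hB)).symm.trans
    (Measure.prod_apply_symm (measurableSet_dist_mem hB))

/-- Tonelli: the `ν`-mass of `B` as an expectation of a truncated volume. -/
lemma setLIntegral_measure_Ioi (μ : Measure ℝ) [SFinite μ] (B : Set ℝ) (hB : MeasurableSet B) :
    ∫⁻ x in B, μ (Set.Ioi x) = ∫⁻ y, volume (B ∩ Set.Iio y) ∂μ := by
  have hT : MeasurableSet {q : ℝ × ℝ | q.1 < q.2} := measurableSet_lt measurable_fst measurable_snd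
  have h := (Measure.prod_apply (μ := volume.restrict B) (ν := μ) hT).symm.trans
    (Measure.prod_apply_symm hT)
  refine h.trans (lintegral_congr fun y => ?_)
  rw [Measure.restrict_apply' hB, Set.inter_comm]
  rfl

/-- In the non-lattice case, the measure `ν(dx) = (1 - F_μ(x)) dx`
(with `1 - F_μ(x) = μ((x,∞))`) is invariant for the transition kernel
`p(x,B) = μ({y ≥ 0 : |x-y| ∈ B})` of the reflected random walk: for every Borel set
`B ⊆ [0,∞)`, `∫_{[0,∞)} p(x,B)(1 - F_μ(x)) dx = ∫_B (1 - F_μ(x)) dx`. -/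
theorem nu_invariant_nonlattice
    (μ : Measure ℝ) [IsProbabilityMeasure μ]
    (hpos : μ (Set.Iio 0) = 0) (hnondeg : μ ≠ Measure.dirac 0)
    (hnonlat : ∀ κ : ℝ, 0 < κ → μ ({x : ℝ | ∃ n : ℕ, x = κ * n})ᶜ ≠ 0)
    (B : Set ℝ) (hB : MeasurableSet B) (hBpos : B ⊆ Set.Ici 0) :
    ∫⁻ x in Set.Ici (0 : ℝ), μ {y : ℝ | 0 ≤ y ∧ |x - y| ∈ B} * μ (Set.Ioi x) =
      ∫⁻ x in B, μ (Set.Ioi x) := by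
  have hnonneg : ∀ᵐ y ∂μ, 0 ≤ y := by
    simp only [ae_iff, not_le]
    exact hpos
  have hstep : ∀ x : ℝ, μ {y : ℝ | 0 ≤ y ∧ |x - y| ∈ B} = μ {y : ℝ | |x - y| ∈ B} := by
    intro x
    refine measure_congr ?_
    filter_upwards [hnonneg] with y hy
    exact propext ⟨fun h => h.2, fun h => ⟨hy, h⟩⟩
  simp_rw [hstep]
  rw [lintegral_step_eq μ hB, setLIntegral_measure_Ioi μ B hB]
  have hmeas := measurable_reflectedVolume hB
  have hL : Measurable fun y : ℝ => volume (B ∩ Set.Iio y) :=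
    Monotone.measurable fun a b hab =>
      measure_mono (Set.inter_subset_inter_right B (Set.Iio_subset_Iio hab))
  have hswap : ∫⁻ p, reflectedVolume B p.2 p.1 ∂(μ.prod μ) =
      ∫⁻ p, reflectedVolume B p.1 p.2 ∂(μ.prod μ) :=
    lintegral_prod_swap (fun p : ℝ × ℝ => reflectedVolume B p.1 p.2)
  have hfst : ∫⁻ p, volume (B ∩ Set.Iio p.1) ∂(μ.prod μ) = ∫⁻ y, volume (B ∩ Set.Iio y) ∂μ :=
    measurePreserving_fst.lintegral_comp hL
  have hsnd : ∫⁻ p, volume (B ∩ Set.Iio p.2) ∂(μ.prod μ) = ∫⁻ y, volume (B ∩ Set.Iio y) ∂μ :=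
    measurePreserving_snd.lintegral_comp hL
  have hsum : ∫⁻ p, reflectedVolume B p.1 p.2 + reflectedVolume B p.2 p.1 ∂(μ.prod μ) =
      ∫⁻ p, volume (B ∩ Set.Iio p.1) + volume (B ∩ Set.Iio p.2) ∂(μ.prod μ) := by
    refine lintegral_congr_ae ?_
    filter_upwards [Measure.quasiMeasurePreserving_fst.ae hnonneg,
      Measure.quasiMeasurePreserving_snd.ae hnonneg] with p h1 h2
    rw [reflectedVolume_add_swap hB h1 h2, volume_inter_Ioc_eq hBpos, volume_inter_Ioc_eq hBpos]
  have hL_fst : Measurable fun p : ℝ × ℝ => volume (B ∩ Set.Iio p.1) := hL.comp measurable_fst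
  rw [lintegral_add_left hmeas, lintegral_add_left hL_fst, hswap, hfst, hsnd,
    ← two_mul, ← two_mul] at hsum
  exact (ENNReal.mul_right_inj two_ne_zero ENNReal.ofNat_ne_top).1 hsum
end

section
/- In the non-lattice case, the measure ρ(dx) = h(x) dx on C with density h(x) = ∫_{[0,∞)} μ((x, x+y]) μ(dy) (with respect to Lebesgue measure) is an invariant measure for the process of reflections: for every Borel set B ⊆ [0,∞), ∫_{(0,∞)} q(x,B) h(x) dx = ∫_B h(x) dx, where q(x,B) = ∫_{[0,x)} μ(B + x − w) U(dw) for x > 0. -/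
open MeasureTheory Filter
open scoped ENNReal

/-- The `n`-fold convolution power `μ^{(n)}` of a measure `μ` on `ℝ`, with
`μ^{(0)} = δ_0`. -/
noncomputable def convPow (μ : MeasureTheory.Measure ℝ) : ℕ → MeasureTheory.Measure ℝ
  | 0 => MeasureTheory.Measure.dirac 0
  | n + 1 => MeasureTheory.Measure.map (fun p : ℝ × ℝ => p.1 + p.2) ((convPow μ n).prod μ)

/-- The potential measure `U = Σ_{n=0}^∞ μ^{(n)}`. -/
noncomputable def potential (μ : MeasureTheory.Measure ℝ) : MeasureTheory.Measure ℝ :=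
  MeasureTheory.Measure.sum (fun n => convPow μ n)

/-- The density `h(x) = ∫_{[0,∞)} μ((x, x+y]) μ(dy)` of the invariant measure `ρ` of
the process of reflections. -/
noncomputable def reflDensity (μ : MeasureTheory.Measure ℝ) (x : ℝ) : ℝ≥0∞ :=
  ∫⁻ y in Set.Ici (0 : ℝ), μ (Set.Ioc x (x + y)) ∂μ

open Set Topology

section ConvPow

theorem ae_nonneg_of_measure_Iio {μ : Measure ℝ} (hpos : μ (Iio 0) = 0) : ∀ᵐ y ∂μ, 0 ≤ y := by
  rw [ae_iff]; simpa [Iio] using hpos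

variable (μ : Measure ℝ) [IsProbabilityMeasure μ]

instance convPow_isProbabilityMeasure (n : ℕ) : IsProbabilityMeasure (convPow μ n) := by
  induction n with
  | zero => exact Measure.dirac.isProbabilityMeasure
  | succ n ih => exact Measure.isProbabilityMeasure_map (by fun_prop)

instance potential_sFinite : SFinite (potential μ) := by
  unfold potential; infer_instance

theorem lintegral_convPow_succ (n : ℕ) {f : ℝ → ℝ≥0∞} (hf : Measurable f) :
    ∫⁻ w, f w ∂(convPow μ (n + 1)) = ∫⁻ w, ∫⁻ y, f (w + y) ∂μ ∂(convPow μ n) := by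
  rw [convPow, lintegral_map hf (by fun_prop), lintegral_prod]
  exact (hf.comp (by fun_prop)).aemeasurable

variable {μ}

theorem convPow_Iio_zero (hpos : μ (Iio 0) = 0) (n : ℕ) : convPow μ n (Iio 0) = 0 := by
  induction n with
  | zero => simp [convPow]
  | succ n ih =>
    rw [← lintegral_indicator_one measurableSet_Iio,
      lintegral_convPow_succ μ n (measurable_one.indicator measurableSet_Iio)]
    rw [lintegral_eq_zero_iff']
    · filter_upwards [ae_nonneg_of_measure_Iio ih] with w hw
      refine (lintegral_congr_ae ?_).trans lintegral_zero
      filter_upwards [ae_nonneg_of_measure_Iio hpos] with y hy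
      simp [add_nonneg hw hy]
    · refine (Measurable.lintegral_prod_right' (f := fun p : ℝ × ℝ =>
        (Iio (0 : ℝ)).indicator (1 : ℝ → ℝ≥0∞) (p.1 + p.2)) ?_).aemeasurable
      exact (measurable_one.indicator measurableSet_Iio).comp (by fun_prop)

theorem ae_potential_nonneg (hpos : μ (Iio 0) = 0) : ∀ᵐ w ∂(potential μ), 0 ≤ w := by
  apply ae_nonneg_of_measure_Iio
  simp [potential, Measure.sum_apply _ measurableSet_Iio, convPow_Iio_zero hpos]

theorem lintegral_exp_neg_convPow (n : ℕ) :
    ∫⁻ w, ENNReal.ofReal (Real.exp (-w)) ∂(convPow μ n) =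
      (∫⁻ y, ENNReal.ofReal (Real.exp (-y)) ∂μ) ^ n := by
  induction n with
  | zero => simp [convPow]
  | succ n ih =>
    rw [lintegral_convPow_succ μ n (by fun_prop), pow_succ, ← ih,
      ← lintegral_mul_const _ (by fun_prop)]
    refine lintegral_congr fun w => ?_
    rw [← lintegral_const_mul _ (by fun_prop)]
    refine lintegral_congr fun y => ?_
    rw [← ENNReal.ofReal_mul (Real.exp_pos _).le, ← Real.exp_add, neg_add]

theorem lintegral_exp_neg_lt_one (hpos : μ (Iio 0) = 0) (hnondeg : μ ≠ Measure.dirac 0) :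
    ∫⁻ y, ENNReal.ofReal (Real.exp (-y)) ∂μ < 1 := by
  have hle : ∀ᵐ y ∂μ, ENNReal.ofReal (Real.exp (-y)) ≤ 1 := by
    filter_upwards [ae_nonneg_of_measure_Iio hpos] with y hy
    simpa using hy
  have hle' : ∫⁻ y, ENNReal.ofReal (Real.exp (-y)) ∂μ ≤ ∫⁻ _, 1 ∂μ := lintegral_mono_ae hle
  have hone : ∫⁻ _, (1 : ℝ≥0∞) ∂μ = 1 := by simp
  refine lt_of_le_of_ne (hone ▸ hle') fun heq => hnondeg ?_
  have hae := ae_eq_of_ae_le_of_lintegral_le hle (by simp [heq]) aemeasurable_const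
    (by simp [heq])
  have hzero : (fun y : ℝ => y) =ᵐ[μ] fun _ => (0 : ℝ) := by
    filter_upwards [hae] with y hy
    simpa using ENNReal.ofReal_eq_one.1 hy
  have hmap : μ.map (fun y => y) = μ.map fun _ => (0 : ℝ) := Measure.map_congr hzero
  simpa using hmap

/-- The random walk with non-degenerate nonnegative steps leaves every half-line. -/
theorem tendsto_convPow_Iio (hpos : μ (Iio 0) = 0) (hnondeg : μ ≠ Measure.dirac 0) (a : ℝ) :
    Tendsto (fun n => convPow μ n (Iio a)) atTop (𝓝 0) := by
  have hlim : Tendsto (fun n => ENNReal.ofReal (Real.exp a) *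
      (∫⁻ y, ENNReal.ofReal (Real.exp (-y)) ∂μ) ^ n) atTop (𝓝 0) := by
    simpa using ENNReal.Tendsto.const_mul
      (ENNReal.tendsto_pow_atTop_nhds_zero_of_lt_one (lintegral_exp_neg_lt_one hpos hnondeg))
      (Or.inr ENNReal.ofReal_ne_top)
  refine tendsto_of_tendsto_of_tendsto_of_le_of_le tendsto_const_nhds hlim
    (fun _ => zero_le) fun n => ?_
  dsimp only
  rw [← lintegral_exp_neg_convPow, ← lintegral_const_mul _ (by fun_prop),
    ← lintegral_indicator_one measurableSet_Iio]
  refine lintegral_mono (indicator_le fun w hw => ?_)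
  rw [← ENNReal.ofReal_mul (Real.exp_pos _).le, ← Real.exp_add]
  have : w < a := hw
  simp only [Pi.one_apply, ENNReal.one_le_ofReal, Real.one_le_exp_iff]
  linarith

end ConvPow

section Density

theorem reflDensity_eq_lintegral {μ : Measure ℝ} (hpos : μ (Iio 0) = 0) (x : ℝ) :
    reflDensity μ x = ∫⁻ y, μ (Ioc x (x + y)) ∂μ := by
  have h : (Ici (0 : ℝ)) =ᵐ[μ] univ := eventuallyEq_univ.2 (ae_nonneg_of_measure_Iio hpos)
  rw [reflDensity, setLIntegral_congr h, setLIntegral_univ]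

theorem measurable_measure_Ici {μ : Measure ℝ} : Measurable fun x : ℝ => μ (Ici x) :=
  Antitone.measurable fun _ _ h => measure_mono (Ici_subset_Ici.2 h)

theorem measurable_measure_Ioi {μ : Measure ℝ} : Measurable fun x : ℝ => μ (Ioi x) :=
  Antitone.measurable fun _ _ h => measure_mono (Ioi_subset_Ioi h)

variable {μ : Measure ℝ} [IsProbabilityMeasure μ]

theorem measurable_measure_Ioc : Measurable fun p : ℝ × ℝ => μ (Ioc p.1 (p.1 + p.2)) := by
  have hs : MeasurableSet {q : (ℝ × ℝ) × ℝ | q.1.1 < q.2 ∧ q.2 ≤ q.1.1 + q.1.2} :=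
    .inter (measurableSet_lt measurable_fst.fst measurable_snd)
      (measurableSet_le measurable_snd (measurable_fst.fst.add measurable_fst.snd))
  exact measurable_measure_prodMk_left hs

theorem measurable_reflDensity : Measurable (reflDensity μ) :=
  measurable_measure_Ioc.lintegral_prod_right'

theorem reflDensity_add_lintegral_Ioi (hpos : μ (Iio 0) = 0) (x : ℝ) :
    reflDensity μ x + ∫⁻ y, μ (Ioi (x + y)) ∂μ = μ (Ioi x) := by
  have hx : Measurable fun y => μ (Ioi (x + y)) :=
    measurable_measure_Ioi.comp (measurable_const_add x)
  rw [reflDensity_eq_lintegral hpos, ← lintegral_add_right _ hx]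
  calc _ = ∫⁻ _, μ (Ioi x) ∂μ := by
        refine lintegral_congr_ae ?_
        filter_upwards [ae_nonneg_of_measure_Iio hpos] with y hy
        rw [← measure_union _ measurableSet_Ioi, Ioc_union_Ioi_eq_Ioi (by linarith)]
        exact Ioc_disjoint_Ioi le_rfl
    _ = _ := by simp

theorem sum_lintegral_reflDensity_convPow (hpos : μ (Iio 0) = 0) (v : ℝ) (n : ℕ) :
    ∑ k ∈ Finset.range n, ∫⁻ w, reflDensity μ (v + w) ∂(convPow μ k) +
      ∫⁻ w, μ (Ioi (v + w)) ∂(convPow μ n) = μ (Ioi v) := by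
  have hv : Measurable fun w => μ (Ioi (v + w)) :=
    measurable_measure_Ioi.comp (measurable_const_add v)
  have hh : Measurable fun w => reflDensity μ (v + w) :=
    measurable_reflDensity.comp (measurable_const_add v)
  induction n with
  | zero => simp [convPow]
  | succ n ih =>
    rw [Finset.sum_range_succ, lintegral_convPow_succ μ n hv, add_assoc,
      ← lintegral_add_left hh, ← ih]
    congr 1
    refine lintegral_congr fun w => ?_
    rw [← reflDensity_add_lintegral_Ioi hpos (v + w)]
    simp only [add_assoc]

theorem tendsto_lintegral_Ioi_convPow (hpos : μ (Iio 0) = 0) (hnondeg : μ ≠ Measure.dirac 0)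
    (v : ℝ) : Tendsto (fun n => ∫⁻ w, μ (Ioi (v + w)) ∂(convPow μ n)) atTop (𝓝 0) := by
  have hs : MeasurableSet {p : ℝ × ℝ | v + p.1 < p.2} :=
    measurableSet_lt (by fun_prop) (by fun_prop)
  have hswap (n : ℕ) : ∫⁻ w, μ (Ioi (v + w)) ∂(convPow μ n) =
      ∫⁻ z, convPow μ n (Iio (z - v)) ∂μ := by
    have h := Measure.prod_apply (μ := convPow μ n) (ν := μ) hs
    rw [Measure.prod_apply_symm hs] at h
    refine h.symm.trans (lintegral_congr fun z => ?_)
    congr 1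
    ext w
    simp [lt_sub_iff_add_lt']
  simp_rw [hswap]
  have h := tendsto_lintegral_of_dominated_convergence
    (μ := μ) (F := fun n z => convPow μ n (Iio (z - v))) (f := fun _ => 0) (fun _ => 1)
    (fun n => (Monotone.measurable fun _ _ h => measure_mono (Iio_subset_Iio (by linarith))))
    (fun n => ae_of_all _ fun z => prob_le_one) (by simp)
    (ae_of_all _ fun z => tendsto_convPow_Iio hpos hnondeg (z - v))
  simpa using h

theorem lintegral_reflDensity_potential (hpos : μ (Iio 0) = 0)
    (hnondeg : μ ≠ Measure.dirac 0) (v : ℝ) :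
    ∫⁻ w, reflDensity μ (v + w) ∂(potential μ) = μ (Ioi v) := by
  rw [potential, lintegral_sum_measure]
  have h := (ENNReal.tendsto_nat_tsum
    (fun k => ∫⁻ w, reflDensity μ (v + w) ∂(convPow μ k))).add
      (tendsto_lintegral_Ioi_convPow hpos hnondeg v)
  simp_rw [sum_lintegral_reflDensity_convPow hpos v, add_zero] at h
  exact tendsto_nhds_unique h tendsto_const_nhds

theorem measure_Ioi_ae_eq_measure_Ici :
    (fun v : ℝ => μ (Ioi v)) =ᵐ[volume] fun v => μ (Ici v) := by
  have hc : {v : ℝ | 0 < μ {v}}.Countable :=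
    Measure.countable_meas_pos_of_disjoint_iUnion (fun v => measurableSet_singleton v)
      fun a b hab => by simpa using hab
  filter_upwards [hc.ae_notMem volume] with v hv
  have hv0 : μ {v} = 0 := by simpa using hv
  rw [← Ioi_union_left]
  refine le_antisymm (measure_mono subset_union_left) ((measure_union_le _ _).trans ?_)
  simp [hv0]

end Density

/-- In terms of the position `v` just before a reflection, the reflection kernel integrates
the density `h` to `∫_{(0,∞)} μ(B + v) μ((v,∞)) dv`. -/
theorem lintegral_reflection_kernel {μ : Measure ℝ} [IsProbabilityMeasure μ]
    (hpos : μ (Iio 0) = 0) (hnondeg : μ ≠ Measure.dirac 0)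
    {g : ℝ → ℝ≥0∞} (hg : Measurable g) :
    ∫⁻ x in Ioi (0 : ℝ), (∫⁻ w in Ico 0 x, g (x - w) ∂(potential μ)) * reflDensity μ x =
      ∫⁻ v in Ioi (0 : ℝ), g v * μ (Ioi v) := by
  set k : ℝ → ℝ≥0∞ := (Ioi (0 : ℝ)).indicator g with hk
  have hkm : Measurable k := hg.indicator measurableSet_Ioi
  have hh := measurable_reflDensity (μ := μ)
  calc _ = ∫⁻ x, ∫⁻ w, k (x - w) * reflDensity μ x ∂(potential μ) := by
        rw [← lintegral_indicator measurableSet_Ioi]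
        refine lintegral_congr fun x => ?_
        rw [lintegral_mul_const _ (by fun_prop)]
        have hin : ∫⁻ w, k (x - w) ∂(potential μ) =
            ∫⁻ w in Ico 0 x, g (x - w) ∂(potential μ) := by
          rw [← lintegral_indicator measurableSet_Ico]
          refine lintegral_congr_ae ?_
          filter_upwards [ae_potential_nonneg hpos] with w hw
          by_cases hwx : w < x <;> simp [hk, indicator, hw, hwx]
        by_cases hx : 0 < x
        · simp [hx, hin]
        · simp [hx, hin]
    _ = ∫⁻ w, (∫⁻ x, k (x - w) * reflDensity μ x) ∂(potential μ) := by
        refine lintegral_lintegral_swap (Measurable.aemeasurable ?_)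
        exact (hkm.comp (measurable_fst.sub measurable_snd)).mul (hh.comp measurable_fst)
    _ = ∫⁻ w, (∫⁻ v, k v * reflDensity μ (v + w)) ∂(potential μ) := by
        refine lintegral_congr fun w => ?_
        rw [← lintegral_add_right_eq_self _ w]
        simp
    _ = ∫⁻ v, ∫⁻ w, k v * reflDensity μ (v + w) ∂(potential μ) := by
        refine lintegral_lintegral_swap (Measurable.aemeasurable ?_)
        exact (hkm.comp measurable_snd).mul (hh.comp (measurable_snd.add measurable_fst))
    _ = _ := by
        rw [← lintegral_indicator measurableSet_Ioi]
        refine lintegral_congr fun v => ?_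
        rw [lintegral_const_mul _ (by fun_prop),
          lintegral_reflDensity_potential hpos hnondeg]
        by_cases hv : 0 < v <;> simp [hk, hv]

theorem lintegral_Ioi_measure_mul {μ : Measure ℝ} [IsProbabilityMeasure μ]
    (hpos : μ (Iio 0) = 0) {B : Set ℝ} (hB : MeasurableSet B) :
    ∫⁻ v in Ioi (0 : ℝ), μ ((fun y => y - v) ⁻¹' B) * μ (Ioi v) =
      ∫⁻ b in B, reflDensity μ b := by
  set f : ℝ → ℝ≥0∞ := B.indicator 1 with hf
  have hfm : Measurable f := measurable_one.indicator hB
  set k : ℝ → ℝ≥0∞ := (Ioi (0 : ℝ)).indicator fun v => μ (Ici v) with hk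
  have hkm : Measurable k := measurable_measure_Ici.indicator measurableSet_Ioi
  calc _ = ∫⁻ v, ∫⁻ y, f (y - v) * k v ∂μ := by
        rw [← lintegral_indicator measurableSet_Ioi]
        refine lintegral_congr_ae ?_
        filter_upwards [measure_Ioi_ae_eq_measure_Ici (μ := μ)] with v hv
        rw [lintegral_mul_const _ (by fun_prop)]
        have : ∫⁻ y, f (y - v) ∂μ = μ ((fun y => y - v) ⁻¹' B) := by
          rw [← lintegral_indicator_one (measurable_sub_const v hB)]
          rfl
        by_cases hv0 : 0 < v <;> simp [hk, hv0, this, hv]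
    _ = ∫⁻ y, (∫⁻ v, f (y - v) * k v) ∂μ := by
        refine lintegral_lintegral_swap (Measurable.aemeasurable ?_)
        exact (hfm.comp (measurable_snd.sub measurable_fst)).mul (hkm.comp measurable_fst)
    _ = ∫⁻ y, (∫⁻ b, f b * k (y - b)) ∂μ := by
        refine lintegral_congr fun y => ?_
        rw [← lintegral_sub_left_eq_self _ y]
        simp
    _ = ∫⁻ b, ∫⁻ y, f b * k (y - b) ∂μ := by
        refine lintegral_lintegral_swap (Measurable.aemeasurable ?_)
        exact (hfm.comp measurable_snd).mul (hkm.comp (measurable_fst.sub measurable_snd))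
    _ = _ := by
        rw [← lintegral_indicator hB]
        refine lintegral_congr fun b => ?_
        rw [lintegral_const_mul _ (by fun_prop)]
        have hs : MeasurableSet {p : ℝ × ℝ | b < p.1 ∧ p.1 ≤ b + p.2} :=
          .inter (measurableSet_lt measurable_const measurable_fst)
            (measurableSet_le measurable_fst (measurable_snd.const_add b))
        have hsec : ∫⁻ y, k (y - b) ∂μ = reflDensity μ b := by
          rw [reflDensity_eq_lintegral hpos]
          have h := Measure.prod_apply (μ := μ) (ν := μ) hs
          rw [Measure.prod_apply_symm hs] at h
          refine Eq.trans (lintegral_congr fun y => ?_) h.symm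
          by_cases hy : b < y
          · simp only [hk, mem_Ioi, sub_pos, hy, indicator_of_mem]
            congr 1
            ext z
            simp [hy, add_comm]
          · simp [hk, hy]
        rw [hsec]
        by_cases hb : b ∈ B <;> simp [hf, hb]

/-- In the non-lattice case, the measure `ρ(dx) = h(x) dx` with
`h(x) = ∫_{[0,∞)} μ((x,x+y]) μ(dy)` is invariant for the transition kernel
`q(x,B) = ∫_{[0,x)} μ(B + x - w) U(dw)` of the process of reflections: for every Borel
`B ⊆ [0,∞)`, `∫_{(0,∞)} q(x,B) h(x) dx = ∫_B h(x) dx`. -/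
theorem rho_invariant_for_reflections_nonlattice
    (μ : Measure ℝ) [IsProbabilityMeasure μ]
    (hpos : μ (Set.Iio 0) = 0) (hnondeg : μ ≠ Measure.dirac 0)
    (hnonlat : ∀ κ : ℝ, 0 < κ → μ ({x : ℝ | ∃ n : ℕ, x = κ * n})ᶜ ≠ 0)
    (B : Set ℝ) (hB : MeasurableSet B) (hBpos : B ⊆ Set.Ici 0) :
    ∫⁻ x in Set.Ioi (0 : ℝ),
        (∫⁻ w in Set.Ico 0 x, μ ((fun b => b + x - w) '' B) ∂(potential μ)) *
          reflDensity μ x =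
      ∫⁻ x in B, reflDensity μ x := by
  have himage (x w : ℝ) : (fun b => b + x - w) '' B = (fun y => y - (x - w)) ⁻¹' B := by
    ext y
    simp only [mem_image, mem_preimage]
    constructor
    · rintro ⟨b, hb, rfl⟩
      simpa [add_sub_assoc] using hb
    · exact fun hy => ⟨_, hy, by ring⟩
  have hg : Measurable fun v : ℝ => μ ((fun y => y - v) ⁻¹' B) :=
    measurable_measure_prodMk_left (s := (fun p : ℝ × ℝ => p.2 - p.1) ⁻¹' B)
      (measurable_snd.sub measurable_fst hB)
  simp_rw [himage]
  rw [lintegral_reflection_kernel hpos hnondeg hg, lintegral_Ioi_measure_mul hpos hB]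
end

section
/- The total mass ∫_0^∞ h(x) dx of the invariant measure ρ of the process of reflections is finite if and only if ∫_0^∞ (1 − F_μ(x))² dx < ∞. This holds, in particular, when ∫_{[0,∞)} √x μ(dx) < ∞. -/
open MeasureTheory Filter
open scoped ENNReal

/-- Tonelli's theorem for the indicator of a measurable set of triples, moving the integral over
the first coordinate to the innermost position. -/
lemma lintegral_measure_slice_eq (μ ν : Measure ℝ) [SFinite μ] [SFinite ν]
    {S : Set (ℝ × ℝ × ℝ)} (hS : MeasurableSet S) :
    ∫⁻ x, ∫⁻ y, μ {z | (x, y, z) ∈ S} ∂μ ∂ν = ∫⁻ y, ∫⁻ z, ν {x | (x, y, z) ∈ S} ∂μ ∂μ := by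
  have hslice : ∀ x y, μ {z | (x, y, z) ∈ S} = ∫⁻ z, S.indicator 1 (x, y, z) ∂μ := fun x y ↦
    (lintegral_indicator_one
      (hS.preimage (by fun_prop : Measurable fun z : ℝ ↦ (x, y, z)))).symm
  have hslice' : ∀ y z, ν {x | (x, y, z) ∈ S} = ∫⁻ x, S.indicator 1 (x, y, z) ∂ν := fun y z ↦
    (lintegral_indicator_one
      (hS.preimage (by fun_prop : Measurable fun x : ℝ ↦ (x, y, z)))).symm
  have hmeas : Measurable (S.indicator (1 : ℝ × ℝ × ℝ → ℝ≥0∞)) := measurable_one.indicator hS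
  simp_rw [hslice, hslice']
  rw [lintegral_lintegral_swap]
  · refine lintegral_congr fun y ↦ lintegral_lintegral_swap ?_
    exact (hmeas.comp (by fun_prop : Measurable fun p : ℝ × ℝ ↦ (p.1, y, p.2))).aemeasurable
  · refine (Measurable.lintegral_prod_right' (f := fun q : (ℝ × ℝ) × ℝ ↦
      S.indicator (1 : ℝ × ℝ × ℝ → ℝ≥0∞) (q.1.1, q.1.2, q.2)) ?_).aemeasurable
    exact hmeas.comp (by fun_prop)

/-- The total mass of `ρ` is the expectation of the minimum of two independent copies. -/
lemma lintegral_reflDensity_eq_lintegral_min (μ : Measure ℝ) [IsProbabilityMeasure μ]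
    (hpos : ∀ᵐ x ∂μ, x ∈ Set.Ici (0 : ℝ)) :
    ∫⁻ x in Set.Ioi (0 : ℝ), reflDensity μ x =
      ∫⁻ y, ∫⁻ z, ENNReal.ofReal (min y z) ∂μ ∂μ := by
  have hS : MeasurableSet {p : ℝ × ℝ × ℝ | p.1 < p.2.2 ∧ p.2.2 ≤ p.1 + p.2.1} := by
    measurability
  simp_rw [reflDensity, Measure.restrict_eq_self_of_ae_mem hpos]
  rw [Measure.restrict_congr_set Ioi_ae_eq_Ici]
  refine (lintegral_measure_slice_eq μ _ hS).trans (lintegral_congr_ae ?_)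
  filter_upwards [hpos] with y hy
  refine lintegral_congr fun z ↦ ?_
  rw [Measure.restrict_apply' measurableSet_Ici]
  have : {x | x < z ∧ z ≤ x + y} ∩ Set.Ici 0 = Set.Ico (max 0 (z - y)) z := by
    ext x
    simp only [Set.mem_inter_iff, Set.mem_ofPred_eq, Set.mem_Ici, Set.mem_Ico, sup_le_iff,
      sub_le_iff_le_add]
    tauto
  rw [this, Real.volume_Ico]
  congr 1
  rw [← min_sub_sub_left, sub_zero, sub_sub_cancel, min_comm]

/-- The integral of the squared tail is the expectation of the minimum of two independent
copies. -/
lemma lintegral_sq_measure_Ioi_eq_lintegral_min (μ : Measure ℝ) [IsProbabilityMeasure μ] :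
    ∫⁻ x in Set.Ioi (0 : ℝ), μ (Set.Ioi x) ^ 2 =
      ∫⁻ y, ∫⁻ z, ENNReal.ofReal (min y z) ∂μ ∂μ := by
  have hS : MeasurableSet {p : ℝ × ℝ × ℝ | p.1 < p.2.1 ∧ p.1 < p.2.2} := by
    measurability
  have hsq : ∀ x, μ (Set.Ioi x) ^ 2 =
      ∫⁻ y, μ {z | (x, y, z) ∈ {p : ℝ × ℝ × ℝ | p.1 < p.2.1 ∧ p.1 < p.2.2}} ∂μ := by
    intro x
    rw [sq, ← setLIntegral_const, ← lintegral_indicator measurableSet_Ioi]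
    refine lintegral_congr fun y ↦ ?_
    by_cases hy : x < y <;> simp [hy, Set.Ioi]
  simp_rw [hsq]
  rw [Measure.restrict_congr_set Ioi_ae_eq_Ici, lintegral_measure_slice_eq μ _ hS]
  refine lintegral_congr fun y ↦ lintegral_congr fun z ↦ ?_
  rw [Measure.restrict_apply' measurableSet_Ici]
  have : {x | (x, y, z) ∈ {p : ℝ × ℝ × ℝ | p.1 < p.2.1 ∧ p.1 < p.2.2}} ∩ Set.Ici 0 =
      Set.Ico 0 (min y z) := by
    ext x
    simp only [Set.mem_inter_iff, Set.mem_ofPred_eq, Set.mem_Ici, Set.mem_Ico, lt_inf_iff]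
    tauto
  rw [this, Real.volume_Ico, sub_zero]

lemma min_le_sqrt_mul_sqrt {y z : ℝ} (hy : 0 ≤ y) (hz : 0 ≤ z) : min y z ≤ √y * √z := by
  rw [← Real.sqrt_mul hy]
  refine Real.le_sqrt_of_sq_le ?_
  rw [sq]
  exact mul_le_mul (min_le_left _ _) (min_le_right _ _) (le_min hy hz) hy

/-- The expected minimum of two independent copies is at most the square of the half moment. -/
lemma lintegral_min_le_sq_lintegral_sqrt (μ : Measure ℝ)
    (hpos : ∀ᵐ x ∂μ, x ∈ Set.Ici (0 : ℝ)) :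
    ∫⁻ y, ∫⁻ z, ENNReal.ofReal (min y z) ∂μ ∂μ ≤ (∫⁻ x, ENNReal.ofReal √x ∂μ) ^ 2 := by
  have hmeas : Measurable fun x : ℝ ↦ ENNReal.ofReal √x := by fun_prop
  rw [sq, ← lintegral_mul_const _ hmeas]
  refine lintegral_mono_ae ?_
  filter_upwards [hpos] with y hy
  rw [← lintegral_const_mul _ hmeas]
  refine lintegral_mono_ae ?_
  filter_upwards [hpos] with z hz
  rw [← ENNReal.ofReal_mul (Real.sqrt_nonneg y)]
  exact ENNReal.ofReal_le_ofReal (min_le_sqrt_mul_sqrt hy hz)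

/-- The total mass `∫_0^∞ h(x) dx` of the invariant measure
`ρ(dx) = h(x) dx` of the process of reflections is finite if and only if
`∫_0^∞ (1 - F_μ(x))² dx < ∞` (where `1 - F_μ(x) = μ((x,∞))`); in particular it is
finite when `∫ √x μ(dx) < ∞`. -/
theorem rho_finite_mass_iff_quadratic_tail_nonlattice
    (μ : Measure ℝ) [IsProbabilityMeasure μ]
    (hpos : μ (Set.Iio 0) = 0) (hnondeg : μ ≠ Measure.dirac 0) :
    ((∫⁻ x in Set.Ioi (0 : ℝ), reflDensity μ x) < ⊤ ↔
        (∫⁻ x in Set.Ioi (0 : ℝ), (μ (Set.Ioi x)) ^ 2) < ⊤) ∧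
      ((∫⁻ x in Set.Ici (0 : ℝ), ENNReal.ofReal (Real.sqrt x) ∂μ) < ⊤ →
        (∫⁻ x in Set.Ioi (0 : ℝ), reflDensity μ x) < ⊤) := by
  have hae : ∀ᵐ x ∂μ, x ∈ Set.Ici (0 : ℝ) := by
    rw [ae_iff]
    simpa [Set.Iio] using hpos
  rw [lintegral_reflDensity_eq_lintegral_min μ hae, lintegral_sq_measure_Ioi_eq_lintegral_min,
    Measure.restrict_eq_self_of_ae_mem hae]
  exact ⟨Iff.rfl, fun h ↦
    (lintegral_min_le_sq_lintegral_sqrt μ hae).trans_lt (ENNReal.pow_lt_top h)⟩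
end
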